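/- arXiv:1511.04821 — 3 statements merged into one kernel-verified Lean document; each statement's English description precedes it below -/
import Mathlib

section
/- Fix r, s ∈ 𝔬 and m ∈ ℤ. If ψ(t·r²) = ψ(t·s²) for all t ∈ ϖ^m𝔬, then r − s ∈ 2·ϖ^{-⌊m/2⌋}𝔬 or r + s ∈ 2·ϖ^{-⌊m/2⌋}𝔬, where ⌊m/2⌋ denotes the floor of m/2. -/
/-- Fix `r, s ∈ 𝔬` and `m ∈ ℤ`. If `ψ(t·r²) = ψ(t·s²)` for all `t ∈ ϖ^m𝔬`,
then `r − s ∈ 2·ϖ^{-⌊m/2⌋}𝔬` or `r + s ∈ 2·ϖ^{-⌊m/2⌋}𝔬`. -/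
theorem boring_lemma {k : Type*} [Field k]
    (hchar : (2 : k) ≠ 0)
    (v : AddValuation k (WithTop ℤ))
    (hsurj : ∀ m : ℤ, ∃ x : k, v x = (m : WithTop ℤ))
    (ϖ : k) (hϖ : v ϖ = (1 : ℤ))
    (e : ℤ) (he : v (2 : k) = (e : WithTop ℤ))
    (ψ : k → ℂ)
    (hψ_add : ∀ x y : k, ψ (x + y) = ψ x * ψ y)
    (hψ_ne : ∃ x : k, ψ x ≠ 1)
    (hψ_cond : ∀ x : k,
      (∀ t : k, (0 : WithTop ℤ) ≤ v t → ψ (t * x) = 1) ↔ ((2 * e : ℤ) : WithTop ℤ) ≤ v x)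
    (r s : k) (hr : (0 : WithTop ℤ) ≤ v r) (hs : (0 : WithTop ℤ) ≤ v s)
    (m : ℤ)
    (h : ∀ t : k, (m : WithTop ℤ) ≤ v t → ψ (t * r ^ 2) = ψ (t * s ^ 2)) :
    ((e - Int.fdiv m 2 : ℤ) : WithTop ℤ) ≤ v (r - s) ∨
      ((e - Int.fdiv m 2 : ℤ) : WithTop ℤ) ≤ v (r + s) := by
  have h0 : ψ 0 = 1 := by
    have := (hψ_cond 0).2 (by simp) 0 (by simp)
    simpa using this
  have hne : ∀ x, ψ x ≠ 0 := by
    intro x hx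
    have h1 := hψ_add x (-x)
    rw [add_neg_cancel, h0, hx, zero_mul] at h1
    exact one_ne_zero h1
  obtain ⟨c, hc⟩ := hsurj m
  have key : ((2 * e : ℤ) : WithTop ℤ) ≤ v (c * ((r - s) * (r + s))) := by
    refine (hψ_cond _).1 fun t ht => ?_
    have h1 := h (t * c) (by
      rw [AddValuation.map_mul, hc]
      exact le_add_of_nonneg_left ht)
    have h2 := hψ_add (t * (c * ((r - s) * (r + s)))) (t * c * s ^ 2)
    have h3 : t * (c * ((r - s) * (r + s))) + t * c * s ^ 2 = t * c * r ^ 2 := by ring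
    rw [h3, h1] at h2
    exact mul_right_cancel₀ (hne (t * c * s ^ 2)) (by rw [one_mul]; exact h2.symm)
  rw [AddValuation.map_mul, AddValuation.map_mul, hc] at key
  generalize v (r - s) = a at *
  generalize v (r + s) = b at *
  induction a using WithTop.recTopCoe with
  | top => left; exact le_top
  | coe a =>
    induction b using WithTop.recTopCoe with
    | top => right; exact le_top
    | coe b =>
      rw [← WithTop.coe_add, ← WithTop.coe_add, WithTop.coe_le_coe] at key
      rw [WithTop.coe_le_coe, WithTop.coe_le_coe]
      have hf : Int.fdiv m 2 = m / 2 := Int.fdiv_eq_ediv_of_nonneg m (by norm_num)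
      rw [hf]
      omega
end

section
/- Let m ≤ −1 be an integer and x, y ∈ kⁿ. If ψ(xᵀ a x) = ψ(yᵀ a y) for every symmetric n×n matrix a all of whose entries lie in ϖ^m𝔬, then x is congruent to y or to −y modulo 2ϖ𝔬ⁿ; that is, either xᵢ − yᵢ ∈ 2ϖ𝔬 for every index i, or xᵢ + yᵢ ∈ 2ϖ𝔬 for every index i. -/
/-- Let `m ≤ −1` and `x, y ∈ kⁿ`. If `ψ(xᵀ a x) = ψ(yᵀ a y)` for every symmetric
`n×n` matrix `a` with entries in `ϖ^m𝔬`, then `x ≡ y` or `x ≡ −y` modulo `2ϖ𝔬ⁿ`. -/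
theorem characters_of_sym_odd {k : Type*} [Field k]
    (hchar : (2 : k) ≠ 0)
    (v : AddValuation k (WithTop ℤ))
    (hsurj : ∀ m : ℤ, ∃ x : k, v x = (m : WithTop ℤ))
    (ϖ : k) (hϖ : v ϖ = (1 : ℤ))
    (e : ℤ) (he : v (2 : k) = (e : WithTop ℤ))
    (ψ : k → ℂ)
    (hψ_add : ∀ x y : k, ψ (x + y) = ψ x * ψ y)
    (hψ_ne : ∃ x : k, ψ x ≠ 1)
    (hψ_cond : ∀ x : k,
      (∀ t : k, (0 : WithTop ℤ) ≤ v t → ψ (t * x) = 1) ↔ ((2 * e : ℤ) : WithTop ℤ) ≤ v x)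
    (n : ℕ) (m : ℤ) (hm : m ≤ -1) (x y : Fin n → k)
    (h : ∀ a : Matrix (Fin n) (Fin n) k, a.IsSymm →
      (∀ i j, (m : WithTop ℤ) ≤ v (a i j)) →
      ψ (∑ i, ∑ j, x i * a i j * x j) = ψ (∑ i, ∑ j, y i * a i j * y j)) :
    (∀ i, ((e + 1 : ℤ) : WithTop ℤ) ≤ v (x i - y i)) ∨
      (∀ i, ((e + 1 : ℤ) : WithTop ℤ) ≤ v (x i + y i)) := by
  have h0 : ψ 0 = 1 := by
    have := (hψ_cond 0).2 (by simp) 0 (by simp)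
    simpa using this
  have key : ∀ a : Matrix (Fin n) (Fin n) k, a.IsSymm →
      (∀ i j, (m : WithTop ℤ) ≤ v (a i j)) → ((2 * e : ℤ) : WithTop ℤ) ≤
        v (∑ i, ∑ j, x i * a i j * x j - ∑ i, ∑ j, y i * a i j * y j) := by
    intro a ha hv
    rw [← hψ_cond]
    intro t ht
    have h1 := h (t • a) (ha.smul t) (by
      intro i j
      rw [Matrix.smul_apply, smul_eq_mul, v.map_mul]
      calc (m : WithTop ℤ) = 0 + m := by simp
        _ ≤ _ := add_le_add ht (hv i j))
    have h2 : ∀ z : Fin n → k, ∑ i, ∑ j, z i * (t • a) i j * z j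
        = t * ∑ i, ∑ j, z i * a i j * z j := by
      intro z
      simp only [Finset.mul_sum, Matrix.smul_apply, smul_eq_mul]
      refine Finset.sum_congr rfl fun i _ => Finset.sum_congr rfl fun j _ => by ring
    rw [h2, h2] at h1
    have h3 : ∀ u w : k, ψ u = ψ w → ψ (u - w) = 1 := by
      intro u w huw
      rw [sub_eq_add_neg, hψ_add, huw, ← hψ_add, add_neg_cancel, h0]
    rw [mul_sub]
    exact h3 _ _ h1
  obtain ⟨c, hc⟩ := hsurj m
  have hsum : ∀ (z : Fin n → k) (i j : Fin n),
      ∑ r, ∑ s, z r * (Matrix.single i j c) r s * z s = c * (z i * z j) := by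
    intro z i j
    rw [Finset.sum_eq_single i, Finset.sum_eq_single j]
    · simp; ring
    · intro b _ hb
      simp [Matrix.single_apply, hb.symm]
    · simp
    · intro b _ hb
      simp [Matrix.single_apply, hb.symm]
    · simp
  have hsv : ∀ i j r s : Fin n, (m : WithTop ℤ) ≤ v (Matrix.single i j c r s) := by
    intro i j r s
    rw [Matrix.single_apply]
    split_ifs
    · exact hc.ge
    · simp
  have hcancel : ∀ d : k, ((2 * e : ℤ) : WithTop ℤ) ≤ v (c * d) →
      ((2 * e + 1 : ℤ) : WithTop ℤ) ≤ v d := by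
    intro d hd
    rw [v.map_mul, hc] at hd
    cases hvd : v d with
    | top => simp
    | coe w =>
      rw [hvd] at hd
      have : 2 * e ≤ m + w := by exact_mod_cast hd
      have : 2 * e + 1 ≤ w := by omega
      exact_mod_cast this
  have hdiag : ∀ i, ((2 * e + 1 : ℤ) : WithTop ℤ) ≤ v ((x i - y i) * (x i + y i)) := by
    intro i
    apply hcancel
    have := key (Matrix.single i i c) (by simp [Matrix.IsSymm]) (hsv i i)
    rw [hsum, hsum] at this
    convert this using 2
    ring
  have hoff : ∀ i j, ((2 * e + 1 : ℤ) : WithTop ℤ) ≤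
      v ((x i - y i) * (x j + y j) + (x i + y i) * (x j - y j)) ∨ i = j := by
    intro i j
    by_cases hij : i = j
    · exact Or.inr hij
    left
    apply hcancel
    have := key (Matrix.single i j c + Matrix.single j i c)
      (by simp [Matrix.IsSymm, add_comm]) (fun r s => v.map_le_add (hsv i j r s) (hsv j i r s))
    simp only [Matrix.add_apply, mul_add, add_mul, Finset.sum_add_distrib, hsum] at this
    convert this using 2
    ring
  have hor : ∀ a b : k, ((2 * e + 1 : ℤ) : WithTop ℤ) ≤ v (a * b) →
      ¬ ((e + 1 : ℤ) : WithTop ℤ) ≤ v a → ((e + 1 : ℤ) : WithTop ℤ) ≤ v b := by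
    intro a b hab ha
    rw [v.map_mul] at hab
    cases hva : v a with
    | top => simp [hva] at ha
    | coe w =>
      cases hvb : v b with
      | top => simp
      | coe u =>
        rw [hva, hvb] at hab
        rw [hva] at ha
        have h1 : 2 * e + 1 ≤ w + u := by exact_mod_cast hab
        have h2 : ¬ (e + 1 ≤ w) := by exact_mod_cast ha
        have : e + 1 ≤ u := by omega
        exact_mod_cast this
  by_contra hcon
  push Not at hcon
  obtain ⟨⟨i, hi⟩, ⟨j, hj⟩⟩ := hcon
  rw [← not_le] at hi hj
  have hqi := hor _ _ (hdiag i) hi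
  have hpj := hor _ (x j - y j) (by rw [mul_comm (x j + y j)]; exact hdiag j) hj
  rcases hoff i j with ho | rfl
  · have h1 : ((2 * e + 1 : ℤ) : WithTop ℤ) ≤ v ((x i + y i) * (x j - y j)) := by
      rw [v.map_mul]
      refine le_trans ?_ (add_le_add hqi hpj)
      have : 2 * e + 1 ≤ (e + 1) + (e + 1) := by omega
      exact_mod_cast this
    have h2 := v.map_le_sub ho h1
    rw [add_sub_cancel_right] at h2
    exact hj (hor _ _ h2 hi)
  · exact hj hqi
end

section
/- Let r, s ∈ ℤ with r ≤ s, and let Q denote the finite quotient 𝔬-module ϖ^r𝔬ⁿ / 2ϖ^s𝔬ⁿ. Then the ℂ-vector space of even functions {f : Q → ℂ : f(−x) = f(x) for all x ∈ Q} has dimension (1/2)·q^{en}·(q^{(s−r)n} + 1). -/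
/-- The fractional ideal `ϖ^m𝔬 = {x ∈ k : val(x) ≥ m}`, as an additive subgroup of `k`. -/
def valAddSubgroup {k : Type*} [Field k] (v : AddValuation k (WithTop ℤ)) (m : ℤ) :
    AddSubgroup k where
  carrier := {x : k | (m : WithTop ℤ) ≤ v x}
  zero_mem' := by simp [v.map_zero]
  add_mem' := by
    intro a b ha hb
    exact le_trans (le_min ha hb) (v.map_add a b)
  neg_mem' := by
    intro a ha
    simpa [v.map_neg] using ha

/-- The lattice `ϖ^m𝔬ⁿ` inside `kⁿ`. -/
def valLattice {k : Type*} [Field k] (v : AddValuation k (WithTop ℤ)) (n : ℕ) (m : ℤ) :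
    AddSubgroup (Fin n → k) :=
  AddSubgroup.pi Set.univ fun _ => valAddSubgroup v m

/-- The even complex-valued functions on an additive group `Q`, as a `ℂ`-subspace of
`Q → ℂ`. -/
noncomputable def evenFns (Q : Type*) [AddCommGroup Q] : Submodule ℂ (Q → ℂ) where
  carrier := {f : Q → ℂ | ∀ x : Q, f (-x) = f x}
  zero_mem' := fun _ => rfl
  add_mem' := by
    intro f g hf hg x
    simp [hf x, hg x]
  smul_mem' := by
    intro c f hf x
    simp [hf x]

open Classical in
theorem aux_even (Q : Type*) [AddCommGroup Q] [Finite Q] :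
    2 * Module.finrank ℂ (evenFns Q) = Nat.card Q + Nat.card {x : Q // -x = x} := by
  have := Fintype.ofFinite Q
  let N : (Q → ℂ) →ₗ[ℂ] (Q → ℂ) := LinearMap.funLeft ℂ ℂ (fun x : Q => -x)
  let P : (Q → ℂ) →ₗ[ℂ] (Q → ℂ) := (2⁻¹ : ℂ) • (LinearMap.id + N)
  have hP : LinearMap.IsProj (evenFns Q) P := by
    constructor
    · intro f x
      simp [P, N, LinearMap.funLeft_apply, add_comm]
    · intro f hf
      ext x
      have : f (-x) = f x := hf x
      simp [P, N, LinearMap.funLeft_apply, this]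
      ring
  have h1 := hP.trace
  have hN : LinearMap.trace ℂ (Q → ℂ) N = (Nat.card {x : Q // -x = x} : ℂ) := by
    rw [LinearMap.trace_eq_matrix_trace ℂ (Pi.basisFun ℂ Q)]
    simp only [Matrix.trace, Matrix.diag, LinearMap.toMatrix_apply, N, LinearMap.funLeft_apply,
      Pi.basisFun_apply, Pi.basisFun_repr, Pi.single_apply]
    rw [Finset.sum_boole, Nat.card_eq_fintype_card, Fintype.card_subtype]
  simp only [P, map_smul, map_add, hN, LinearMap.trace_id, Module.finrank_fintype_fun_eq_card,
    smul_eq_mul] at h1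
  rw [← Nat.card_eq_fintype_card] at h1
  have h2 : (2 : ℂ) * Module.finrank ℂ (evenFns Q)
      = Nat.card Q + Nat.card {x : Q // -x = x} := by
    rw [← h1]; ring
  exact_mod_cast h2

theorem aux_mem {k : Type*} [Field k] (v : AddValuation k (WithTop ℤ)) (m : ℤ) (x : k) :
    x ∈ valAddSubgroup v m ↔ (m : WithTop ℤ) ≤ v x := Iff.rfl

theorem aux_mul {k : Type*} [Field k] (v : AddValuation k (WithTop ℤ)) (m j : ℤ) (t x : k)
    (ht : v t = (m : WithTop ℤ)) :
    t * x ∈ valAddSubgroup v (m + j) ↔ x ∈ valAddSubgroup v j := by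
  rw [aux_mem, aux_mem, v.map_mul, ht]
  cases h : v x with
  | top => simp
  | coe a =>
    norm_cast
    exact add_le_add_iff_left m

theorem aux_map {k : Type*} [Field k] (v : AddValuation k (WithTop ℤ)) (m j : ℤ) (t : k)
    (ht : v t = (m : WithTop ℤ)) (ht0 : t ≠ 0) :
    (valAddSubgroup v j).map (AddMonoidHom.mulLeft t) = valAddSubgroup v (m + j) := by
  ext y
  simp only [AddSubgroup.mem_map, AddMonoidHom.coe_mulLeft]
  constructor
  · rintro ⟨x, hx, rfl⟩
    exact (aux_mul v m j t x ht).2 hx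
  · intro hy
    refine ⟨t⁻¹ * y, ?_, mul_inv_cancel_left₀ ht0 y⟩
    rw [← aux_mul v m j t _ ht, mul_inv_cancel_left₀ ht0]
    exact hy

theorem aux_anti {k : Type*} [Field k] (v : AddValuation k (WithTop ℤ)) {a b : ℤ} (h : a ≤ b) :
    valAddSubgroup v b ≤ valAddSubgroup v a := by
  intro x hx
  rw [aux_mem] at *
  exact le_trans (by exact_mod_cast h) hx

theorem aux_step {k : Type*} [Field k] (v : AddValuation k (WithTop ℤ))
    (hsurj : ∀ m : ℤ, ∃ x : k, v x = (m : WithTop ℤ)) (m : ℤ) :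
    (valAddSubgroup v (m + 1)).relIndex (valAddSubgroup v m) =
      (valAddSubgroup v 1).relIndex (valAddSubgroup v 0) := by
  obtain ⟨t, ht⟩ := hsurj m
  have ht0 : t ≠ 0 := by
    rintro rfl
    rw [v.map_zero] at ht
    exact WithTop.top_ne_coe ht
  have h0 := aux_map v m 0 t ht ht0
  rw [add_zero] at h0
  rw [← aux_map v m 1 t ht ht0, ← h0]
  exact AddSubgroup.relIndex_map_map_of_injective _ _ (mul_right_injective₀ ht0)

theorem aux_rel {k : Type*} [Field k] (v : AddValuation k (WithTop ℤ))
    (hsurj : ∀ m : ℤ, ∃ x : k, v x = (m : WithTop ℤ)) (m : ℤ) (N : ℕ) :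
    (valAddSubgroup v (m + N)).relIndex (valAddSubgroup v m) =
      (valAddSubgroup v 1).relIndex (valAddSubgroup v 0) ^ N := by
  induction N with
  | zero => simp
  | succ N ih =>
    rw [← AddSubgroup.relIndex_mul_relIndex _ (valAddSubgroup v (m + N)) _
      (aux_anti v (by push_cast; omega)) (aux_anti v (by omega)), ih]
    have := aux_step v hsurj (m + N)
    rw [show m + ((N + 1 : ℕ) : ℤ) = m + N + 1 by push_cast; ring, this, pow_succ, mul_comm]

theorem aux_lat {k : Type*} [Field k] (v : AddValuation k (WithTop ℤ)) (n : ℕ) (a b : ℤ) :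
    (valLattice v n b).relIndex (valLattice v n a) =
      (valAddSubgroup v b).relIndex (valAddSubgroup v a) ^ n := by
  let φ : (Fin n → valAddSubgroup v a) →+ (Fin n → k) :=
    { toFun := fun x i => (x i : k)
      map_zero' := rfl
      map_add' := fun _ _ => rfl }
  have hr : φ.range = valLattice v n a := by
    ext x
    simp only [AddMonoidHom.mem_range, valLattice, AddSubgroup.mem_pi]
    constructor
    · rintro ⟨y, rfl⟩ i _
      exact (y i).2
    · intro h
      exact ⟨fun i => ⟨x i, h i trivial⟩, rfl⟩
  have hc : (valLattice v n b).comap φ = AddSubgroup.pi Set.univ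
      (fun _ => (valAddSubgroup v b).addSubgroupOf (valAddSubgroup v a)) := by
    ext x
    simp only [AddSubgroup.mem_comap, valLattice, AddSubgroup.mem_pi, AddSubgroup.mem_addSubgroupOf]
    rfl
  rw [← hr, ← AddSubgroup.index_comap, hc, AddSubgroup.index_pi]
  simp [AddSubgroup.relIndex]

theorem aux_full {k : Type*} [Field k] (v : AddValuation k (WithTop ℤ))
    (hsurj : ∀ m : ℤ, ∃ x : k, v x = (m : WithTop ℤ)) (n : ℕ) (a : ℤ) (N : ℕ) :
    (valLattice v n (a + N)).relIndex (valLattice v n a) =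
      (valAddSubgroup v 1).relIndex (valAddSubgroup v 0) ^ (N * n) := by
  rw [aux_lat, aux_rel v hsurj, pow_mul]

theorem aux_lat_anti {k : Type*} [Field k] (v : AddValuation k (WithTop ℤ)) (n : ℕ)
    {a b : ℤ} (h : a ≤ b) : valLattice v n b ≤ valLattice v n a :=
  fun _ hx i hi => aux_anti v h (hx i hi)

theorem aux_fix {k : Type*} [Field k] (v : AddValuation k (WithTop ℤ))
    (e : ℤ) (he : v (2 : k) = (e : WithTop ℤ)) (n : ℕ) (r s : ℤ) (hrs : r ≤ s) :
    Nat.card {x : valLattice v n r ⧸ (valLattice v n (e + s)).addSubgroupOf (valLattice v n r) //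
      -x = x} = (valLattice v n (e + s)).relIndex (valLattice v n s) := by
  let f : valLattice v n s →+
      valLattice v n r ⧸ (valLattice v n (e + s)).addSubgroupOf (valLattice v n r) :=
    (QuotientAddGroup.mk' _).comp (AddSubgroup.inclusion (aux_lat_anti v n hrs))
  have hk : f.ker = (valLattice v n (e + s)).addSubgroupOf (valLattice v n s) := by
    ext x
    simp only [f, AddMonoidHom.mem_ker, AddMonoidHom.comp_apply, QuotientAddGroup.mk'_apply,
      QuotientAddGroup.eq_zero_iff, AddSubgroup.mem_addSubgroupOf, AddSubgroup.coe_inclusion]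
  have key : ∀ y : Fin n → k, y + y ∈ valLattice v n (e + s) ↔ y ∈ valLattice v n s := by
    intro y
    simp only [valLattice, AddSubgroup.mem_pi, Pi.add_apply]
    simp only [← two_mul, aux_mul v e s 2 _ he]
  rw [AddSubgroup.relIndex, ← hk, AddSubgroup.index_ker]
  refine Nat.card_congr (Equiv.subtypeEquivRight fun x => ?_)
  induction x using QuotientAddGroup.induction_on with
  | H x =>
    rw [← QuotientAddGroup.mk_neg, QuotientAddGroup.eq, neg_neg, AddSubgroup.mem_addSubgroupOf,
      AddSubgroup.coe_add, key]
    constructor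
    · intro h
      exact ⟨⟨x, h⟩, rfl⟩
    · rintro ⟨y, hy⟩
      have hy' : -(AddSubgroup.inclusion (aux_lat_anti v n hrs) y) + x ∈
        (valLattice v n (e + s)).addSubgroupOf (valLattice v n r) := QuotientAddGroup.eq.1 hy
      have he0 : 0 ≤ e := by
        have h := v.map_add 1 1
        rw [v.map_one, min_self, one_add_one_eq_two, he] at h
        exact_mod_cast h
      rw [AddSubgroup.mem_addSubgroupOf] at hy'
      have h3 := (valLattice v n s).add_mem y.2 (aux_lat_anti v n (by omega : s ≤ e + s) hy')
      simpa using h3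

/-- For `r ≤ s`, the space of even functions on `Q = ϖ^r𝔬ⁿ / 2ϖ^s𝔬ⁿ` has
dimension `(1/2)·q^{en}·(q^{(s−r)n} + 1)` (stated with both sides multiplied by 2). -/
theorem dim_even_functions {k : Type*} [Field k]
    (hchar : (2 : k) ≠ 0)
    (v : AddValuation k (WithTop ℤ))
    (hsurj : ∀ m : ℤ, ∃ x : k, v x = (m : WithTop ℤ))
    (ϖ : k) (hϖ : v ϖ = (1 : ℤ))
    (e : ℤ) (he : v (2 : k) = (e : WithTop ℤ))
    (q : ℕ)
    (hres_fin : Finite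
      (valAddSubgroup v 0 ⧸ (valAddSubgroup v 1).addSubgroupOf (valAddSubgroup v 0)))
    (hq : Nat.card
      (valAddSubgroup v 0 ⧸ (valAddSubgroup v 1).addSubgroupOf (valAddSubgroup v 0)) = q)
    (n : ℕ) (r s : ℤ) (hrs : r ≤ s) :
    2 * Module.finrank ℂ
        (evenFns
          (valLattice v n r ⧸ (valLattice v n (e + s)).addSubgroupOf (valLattice v n r))) =
      q ^ (e * n).toNat * (q ^ ((s - r) * n).toNat + 1) := by
  have he0 : 0 ≤ e := by
    have h := v.map_add 1 1
    rw [v.map_one, min_self, one_add_one_eq_two, he] at h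
    exact_mod_cast h
  have hq' : (valAddSubgroup v 1).relIndex (valAddSubgroup v 0) = q := hq
  have hq0 : q ≠ 0 := by
    rw [← hq]
    exact Nat.card_pos.ne'
  obtain ⟨E, rfl⟩ := Int.eq_ofNat_of_zero_le he0
  obtain ⟨M, hM⟩ := Int.eq_ofNat_of_zero_le (sub_nonneg.2 hrs)
  have hc : Nat.card
      (valLattice v n r ⧸ (valLattice v n (E + s)).addSubgroupOf (valLattice v n r)) =
      q ^ ((E + M) * n) := by
    have := aux_full v hsurj n r (E + M)
    rw [hq', show r + ((E + M : ℕ) : ℤ) = E + s by push_cast; omega] at this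
    exact this
  have hfix := aux_fix v E he n r s hrs
  rw [add_comm (E : ℤ) s, aux_full v hsurj n s E, hq', add_comm s (E : ℤ)] at hfix
  have : Finite (valLattice v n r ⧸ (valLattice v n (E + s)).addSubgroupOf (valLattice v n r)) :=
    Nat.finite_of_card_ne_zero (by rw [hc]; exact pow_ne_zero _ hq0)
  rw [aux_even, hc, hfix, hM]
  have e1 : ((E : ℤ) * n).toNat = E * n := by rw [← Nat.cast_mul, Int.toNat_natCast]
  have e2 : ((M : ℤ) * n).toNat = M * n := by rw [← Nat.cast_mul, Int.toNat_natCast]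
  rw [e1, e2]
  ring
end
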